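/- Let n ≥ 2 and let m = 2m₀+1 be odd with m₀ ≥ 1. There exists a nonzero polynomial P in (n−1)m+1 complex variables such that for every Hankel tensor H of order m and dimension n whose parameter vector h satisfies P(h) ≠ 0, one has rank_V(H) = m₀(n−1) + ⌈n/2⌉ and m₀(n−1) + 1 ≤ brank(H) ≤ rank(H) ≤ rank_S(H) ≤ rank_V(H). -/

import Mathlib

open scoped BigOperators
open MvPolynomial

noncomputable section

/-- An order-`m`, dimension-`n` complex tensor. -/
abbrev Tensor (m n : ℕ) := (Fin m → Fin n) → ℂ

/-- Tensors expressible as a sum of `r` rank-one tensors. -/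
def cpSet (m n r : ℕ) : Set (Tensor m n) :=
  {T | ∃ u : Fin r → Fin m → Fin n → ℂ, ∀ i, T i = ∑ k, ∏ j, u k j (i j)}

/-- Tensors expressible as a sum of `r` symmetric rank-one tensors. -/
def symSet (m n r : ℕ) : Set (Tensor m n) :=
  {T | ∃ v : Fin r → Fin n → ℂ, ∀ i, T i = ∑ k, ∏ j, v k (i j)}

/-- The Vandermonde vector `v(a,b) ∈ ℂ^n`, `v(a,b)_i = a^(n-1-i) * b^i`. -/
def vand (n : ℕ) (a b : ℂ) : Fin n → ℂ := fun i => a ^ (n - 1 - (i : ℕ)) * b ^ (i : ℕ)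

/-- Tensors expressible as a sum of `r` Vandermonde rank-one tensors. -/
def vandSet (m n r : ℕ) : Set (Tensor m n) :=
  {T | ∃ ab : Fin r → ℂ × ℂ, ∀ i, T i = ∑ k, ∏ j, vand n (ab k).1 (ab k).2 (i j)}

/-- The cp rank of a tensor. -/
def cpRank {m n : ℕ} (T : Tensor m n) : ℕ := sInf {r | T ∈ cpSet m n r}

/-- The symmetric rank of a tensor. -/
def symRank {m n : ℕ} (T : Tensor m n) : ℕ := sInf {r | T ∈ symSet m n r}

/-- The Vandermonde rank of a tensor. -/
def vandRank {m n : ℕ} (T : Tensor m n) : ℕ := sInf {r | T ∈ vandSet m n r}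

/-- The border rank of a tensor (closure in the product topology). -/
def brank {m n : ℕ} (T : Tensor m n) : ℕ := sInf {r | T ∈ closure (cpSet m n r)}

/-- The symmetric border rank of a tensor. -/
def bSymRank {m n : ℕ} (T : Tensor m n) : ℕ := sInf {r | T ∈ closure (symSet m n r)}

/-- The border Vandermonde rank of a tensor. -/
def bVandRank {m n : ℕ} (T : Tensor m n) : ℕ := sInf {r | T ∈ closure (vandSet m n r)}

/-- `T` is the Hankel tensor with parameter vector `h ∈ ℂ^{(n-1)m+1}`. -/
def IsHankel {m n : ℕ} (T : Tensor m n) (h : Fin ((n - 1) * m + 1) → ℂ) : Prop :=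
  ∀ i : Fin m → Fin n, T i = h ⟨∑ j, (i j : ℕ), by
    have h1 : ∑ j, (i j : ℕ) ≤ ∑ _j : Fin m, (n - 1) :=
      Finset.sum_le_sum fun j _ => Nat.le_pred_of_lt (i j).isLt
    simp only [Finset.sum_const, Finset.card_univ, Fintype.card_fin, smul_eq_mul] at h1
    exact Nat.lt_succ_of_le (h1.trans (le_of_eq (Nat.mul_comm m (n - 1))))⟩

/-- The `(d-r+1) × (r+1)` Hankel (catalecticant) matrix `C_{d-r,r}(h)` of `h ∈ ℂ^{d+1}`. -/
def hMat (d r : ℕ) (h : Fin (d + 1) → ℂ) : Matrix (Fin (d - r + 1)) (Fin (r + 1)) ℂ :=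
  Matrix.of fun i j => if hij : (i : ℕ) + (j : ℕ) < d + 1 then h ⟨(i : ℕ) + (j : ℕ), hij⟩ else 0

/-- The binary form `f(x,y) = f_0 x^r + f_1 x^(r-1) y + ⋯ + f_r y^r`. -/
def binForm (r : ℕ) (f : Fin (r + 1) → ℂ) : MvPolynomial (Fin 2) ℂ :=
  ∑ j : Fin (r + 1), C (f j) * X 0 ^ (r - (j : ℕ)) * X 1 ^ (j : ℕ)

/-- The binary form `h(x,y) = ∑_j binom(d,j) h_j x^j y^(d-j)` associated with `h ∈ ℂ^{d+1}`. -/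
def assocForm (d : ℕ) (h : Fin (d + 1) → ℂ) : MvPolynomial (Fin 2) ℂ :=
  ∑ j : Fin (d + 1), C ((d.choose (j : ℕ) : ℂ) * h j) * X 0 ^ (j : ℕ) * X 1 ^ (d - (j : ℕ))

/-- Parameter vectors of binary forms of Waring rank at most `r`. -/
def waringSet (d r : ℕ) : Set (Fin (d + 1) → ℂ) :=
  {h | ∃ ab : Fin r → ℂ × ℂ,
    assocForm d h = ∑ i, (C (ab i).1 * X 0 + C (ab i).2 * X 1) ^ d}

/-- The Waring rank of the binary form associated with `h`. -/
def waringRank (d : ℕ) (h : Fin (d + 1) → ℂ) : ℕ := sInf {r | h ∈ waringSet d r}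

/-- The border Waring rank of the binary form associated with `h`. -/
def bWaringRank (d : ℕ) (h : Fin (d + 1) → ℂ) : ℕ := sInf {r | h ∈ closure (waringSet d r)}

/-- The square Hankel matrix of size `r` of a sequence. -/
def hankelMatrix {A : Type*} (g : ℕ → A) (r : ℕ) : Matrix (Fin r) (Fin r) A :=
  Matrix.of fun i j => g (i + j)

/-- The coefficients expressing, up to the factor `det (hankelMatrix g r)`, the terms
`g (r + i)` through the preceding `r` terms. -/
def recCoeff {A : Type*} [CommRing A] (g : ℕ → A) (r : ℕ) : Fin r → A :=
  (hankelMatrix g r).adjugate.mulVec fun i => g (r + i)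

/-- The characteristic polynomial, up to a scalar, of the order-`r` linear recurrence satisfied
by the first `2 * r` terms of a sequence. -/
def recPoly {A : Type*} [CommRing A] (g : ℕ → A) (r : ℕ) : Polynomial A :=
  Polynomial.C (hankelMatrix g r).det * Polynomial.X ^ r -
    ∑ j : Fin r, Polynomial.C (recCoeff g r j) * Polynomial.X ^ (j : ℕ)

section Hankel

variable {A B : Type*} [CommRing A] [CommRing B]

lemma hankelMatrix_comp (φ : A →+* B) (g : ℕ → A) (r : ℕ) :
    hankelMatrix (fun k => φ (g k)) r = φ.mapMatrix (hankelMatrix g r) := by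
  ext i j
  simp [hankelMatrix]

lemma det_hankelMatrix_comp (φ : A →+* B) (g : ℕ → A) (r : ℕ) :
    (hankelMatrix (fun k => φ (g k)) r).det = φ (hankelMatrix g r).det := by
  rw [hankelMatrix_comp, RingHom.map_det]

lemma recCoeff_comp (φ : A →+* B) (g : ℕ → A) (r : ℕ) (j : Fin r) :
    recCoeff (fun k => φ (g k)) r j = φ (recCoeff g r j) := by
  simp only [recCoeff, hankelMatrix_comp, ← RingHom.map_adjugate, Matrix.mulVec, dotProduct,
    map_sum, map_mul]
  rfl

lemma recPoly_comp (φ : A →+* B) (g : ℕ → A) (r : ℕ) :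
    recPoly (fun k => φ (g k)) r = (recPoly g r).map φ := by
  simp [recPoly, recCoeff_comp, det_hankelMatrix_comp, Polynomial.map_sum]

lemma det_hankelMatrix_mul (g : ℕ → A) {r i : ℕ} (hi : i < r) :
    (hankelMatrix g r).det * g (i + r) = ∑ j : Fin r, recCoeff g r j * g (i + j) := by
  have h : (hankelMatrix g r).mulVec (recCoeff g r) =
      (hankelMatrix g r).det • fun i : Fin r => g (r + i) := by
    rw [recCoeff, Matrix.mulVec_mulVec, Matrix.mul_adjugate, Matrix.smul_mulVec, Matrix.one_mulVec]
  have h' := congrFun h ⟨i, hi⟩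
  simp only [Matrix.mulVec, dotProduct, hankelMatrix, Matrix.of_apply, Pi.smul_apply,
    smul_eq_mul] at h'
  rw [add_comm i r]
  simp only [hankelMatrix]
  rw [← h']
  exact Finset.sum_congr rfl fun j _ => mul_comm _ _

lemma degree_recPoly_tail_lt (g : ℕ → A) (r : ℕ) :
    (∑ j : Fin r, Polynomial.C (recCoeff g r j) * Polynomial.X ^ (j : ℕ)).degree <
      (r : WithBot ℕ) := by
  refine (Polynomial.degree_sum_le _ _).trans_lt ?_
  refine (Finset.sup_lt_iff (WithBot.bot_lt_coe r)).2 fun j _ => ?_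
  exact (Polynomial.degree_C_mul_X_pow_le _ _).trans_lt (WithBot.coe_lt_coe.2 j.2)

lemma natDegree_recPoly {g : ℕ → A} {r : ℕ} (h : (hankelMatrix g r).det ≠ 0) :
    (recPoly g r).natDegree = r := by
  apply Polynomial.natDegree_eq_of_degree_eq_some
  rw [recPoly, Polynomial.degree_sub_eq_left_of_degree_lt] <;>
  rw [Polynomial.degree_C_mul_X_pow _ h]
  exact degree_recPoly_tail_lt g r

lemma eval_recPoly (g : ℕ → A) (r : ℕ) (x : A) :
    (recPoly g r).eval x =
      (hankelMatrix g r).det * x ^ r - ∑ j : Fin r, recCoeff g r j * x ^ (j : ℕ) := by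
  simp [recPoly, Polynomial.eval_finsetSum]

end Hankel

lemma exists_injective_roots {p : Polynomial ℂ} (hp : p.Separable) :
    ∃ x : Fin p.natDegree → ℂ, Function.Injective x ∧ ∀ i, p.eval (x i) = 0 := by
  classical
  have hcard : p.roots.toFinset.card = p.natDegree := by
    rw [Multiset.toFinset_card_of_nodup (Polynomial.nodup_roots hp),
      IsAlgClosed.card_roots_eq_natDegree]
  refine ⟨fun i => (p.roots.toFinset.equivFinOfCardEq hcard).symm i, ?_, fun i => ?_⟩
  · exact Subtype.val_injective.comp (Equiv.injective _)
  · have := ((p.roots.toFinset.equivFinOfCardEq hcard).symm i).2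
    rw [Multiset.mem_toFinset] at this
    exact Polynomial.isRoot_of_mem_roots this

/-- A sequence whose recurrence polynomial is separable is a combination of geometric sequences. -/
lemma exists_eq_sum_geometric {g : ℕ → ℂ} {r : ℕ} (hdet : (hankelMatrix g r).det ≠ 0)
    (hsep : (recPoly g r).Separable) :
    ∃ c x : Fin r → ℂ, ∀ k < 2 * r, g k = ∑ l, c l * x l ^ k := by
  obtain ⟨x, hx, hroot⟩ : ∃ x : Fin r → ℂ, Function.Injective x ∧
      ∀ i, (recPoly g r).eval (x i) = 0 := by
    have := exists_injective_roots hsep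
    rwa [natDegree_recPoly hdet] at this
  have hV : IsUnit (Matrix.vandermonde x).transpose.det := by
    rw [Matrix.det_transpose]
    exact (Matrix.det_vandermonde_ne_zero_iff.2 hx).isUnit
  obtain ⟨c, hc⟩ := Matrix.mulVec_surjective_iff_isUnit.2
    ((Matrix.isUnit_iff_isUnit_det _).2 hV) fun i : Fin r => g i
  refine ⟨c, x, fun k => ?_⟩
  induction k using Nat.strong_induction_on with
  | _ k ih =>
    intro hk
    rcases lt_or_ge k r with hkr | hkr
    · rw [← congrFun hc ⟨k, hkr⟩]
      simp [Matrix.mulVec, dotProduct, Matrix.vandermonde_apply, mul_comm]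
    · obtain ⟨i, rfl⟩ := Nat.exists_eq_add_of_le' hkr
      apply mul_left_cancel₀ hdet
      rw [det_hankelMatrix_mul g (by omega)]
      have hx' : ∀ l, (hankelMatrix g r).det * x l ^ r =
          ∑ j : Fin r, recCoeff g r j * x l ^ (j : ℕ) := fun l => by
        have := hroot l
        rwa [eval_recPoly, sub_eq_zero] at this
      calc ∑ j : Fin r, recCoeff g r j * g (i + j)
          = ∑ j : Fin r, recCoeff g r j * ∑ l, c l * x l ^ (i + (j : ℕ)) :=
            Finset.sum_congr rfl fun j _ => by rw [ih (i + j) (by omega) (by omega)]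
        _ = ∑ l, c l * x l ^ i * ∑ j : Fin r, recCoeff g r j * x l ^ (j : ℕ) := by
            simp only [Finset.mul_sum]
            rw [Finset.sum_comm]
            exact Finset.sum_congr rfl fun l _ => Finset.sum_congr rfl fun j _ => by ring
        _ = _ := by
            rw [Finset.mul_sum]
            exact Finset.sum_congr rfl fun l _ => by rw [← hx' l]; ring

lemma resultant_derivative_ne_zero_iff {p : Polynomial ℂ} {r : ℕ} (hr : 0 < r)
    (hp : p.natDegree = r) :
    p.resultant (Polynomial.derivative p) r (r - 1) ≠ 0 ↔ p.Separable := by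
  have hp0 : p ≠ 0 := by rintro rfl; simp at hp; omega
  subst hp
  rw [← Polynomial.natDegree_derivative, Ne, Polynomial.resultant_eq_zero_iff]
  simp [hp0, Polynomial.Separable]

/-- A finite vector, extended by zero to a sequence. -/
def extendZero {A : Type*} [Zero A] {N : ℕ} (h : Fin N → A) (k : ℕ) : A :=
  if hk : k < N then h ⟨k, hk⟩ else 0

lemma eval_extendZero_X {N : ℕ} (h : Fin N → ℂ) (k : ℕ) :
    MvPolynomial.eval h (extendZero (MvPolynomial.X : Fin N → MvPolynomial (Fin N) ℂ) k) =
      extendZero h k := by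
  unfold extendZero
  split_ifs <;> simp

/-- The determinant of the generic Hankel matrix of size `r`. -/
def hankelDetPoly (N r : ℕ) : MvPolynomial (Fin N) ℂ :=
  (hankelMatrix (extendZero MvPolynomial.X) r).det

/-- The discriminant, up to a factor, of the generic recurrence polynomial of order `r`. -/
def recDiscPoly (N r : ℕ) : MvPolynomial (Fin N) ℂ :=
  (recPoly (extendZero MvPolynomial.X) r).resultant
    (Polynomial.derivative (recPoly (extendZero MvPolynomial.X) r)) r (r - 1)

lemma eval_hankelDetPoly {N : ℕ} (r : ℕ) (h : Fin N → ℂ) :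
    MvPolynomial.eval h (hankelDetPoly N r) = (hankelMatrix (extendZero h) r).det := by
  rw [hankelDetPoly, ← det_hankelMatrix_comp]
  simp only [eval_extendZero_X]

lemma eval_recDiscPoly {N : ℕ} (r : ℕ) (h : Fin N → ℂ) :
    MvPolynomial.eval h (recDiscPoly N r) =
      (recPoly (extendZero h) r).resultant
        (Polynomial.derivative (recPoly (extendZero h) r)) r (r - 1) := by
  have hmap : (recPoly (extendZero MvPolynomial.X) r).map (MvPolynomial.eval h) =
      recPoly (extendZero h) r := by
    rw [← recPoly_comp]
    exact congrArg (recPoly · r) (funext (eval_extendZero_X h))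
  rw [recDiscPoly, ← Polynomial.resultant_map_map, ← Polynomial.derivative_map, hmap]

lemma hankelDetPoly_ne_zero {N r : ℕ} (hr : 2 * r ≤ N + 1) : hankelDetPoly N r ≠ 0 := by
  intro h0
  let w : Fin N → ℂ := fun k => if (k : ℕ) + 1 = r then 1 else 0
  have h1 := eval_hankelDetPoly r w
  rw [h0, map_zero] at h1
  obtain ⟨v, hv, hv0⟩ := Matrix.exists_mulVec_eq_zero_iff.2 h1.symm
  refine hv (funext fun j => ?_)
  have := congrFun hv0 ⟨r - 1 - j, by omega⟩
  simp only [Matrix.mulVec, dotProduct] at this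
  rw [Finset.sum_eq_single j] at this
  · have hj := j.2
    have h2 : r - 1 - (j : ℕ) + j < N := by omega
    have h3 : r - 1 - (j : ℕ) + j + 1 = r := by omega
    simpa [hankelMatrix, extendZero, w, h2, h3] using this
  · intro b _ hb
    have hj := j.2
    have hb' : (b : ℕ) ≠ j := fun h => hb (Fin.ext h)
    have h3 : ¬ (r - 1 - (j : ℕ) + b + 1 = r) := by omega
    simp [hankelMatrix, extendZero, w, h3]
  · simp

lemma recDiscPoly_ne_zero {N r : ℕ} (hr : 2 ≤ r) (hN : r < N) : recDiscPoly N r ≠ 0 := by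
  intro h0
  let w : Fin N → ℂ := fun k => if (k : ℕ) = 0 ∨ (k : ℕ) = r then 1 else 0
  have hw : ∀ k, extendZero w k = if k = 0 ∨ k = r then 1 else 0 := fun k => by
    unfold extendZero
    split_ifs <;> first | rfl | omega | simp_all [w]
  have hdet : (hankelMatrix (extendZero w) r).det ≠ 0 := by
    intro h1
    obtain ⟨v, hv, hv0⟩ := Matrix.exists_mulVec_eq_zero_iff.2 h1
    refine hv (funext fun j => ?_)
    have hj := j.2
    have := congrFun hv0 ⟨if (j : ℕ) = 0 then 0 else r - j, by split_ifs <;> omega⟩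
    simp only [Matrix.mulVec, dotProduct] at this
    rw [Finset.sum_eq_single j] at this
    · simp only [hankelMatrix, Matrix.of_apply, hw] at this
      rw [if_pos (by split_ifs <;> omega)] at this
      simpa using this
    · intro b _ hb
      have hb' : (b : ℕ) ≠ j := fun h => hb (Fin.ext h)
      have := b.2
      simp only [hankelMatrix, Matrix.of_apply, hw]
      rw [if_neg (by split_ifs <;> omega), zero_mul]
    · simp
  have hcoeff : ∀ j : Fin r, recCoeff (extendZero w) r j =
      if (j : ℕ) = 0 then (hankelMatrix (extendZero w) r).det else 0 := by
    let e : Fin r → ℂ := fun i => if (i : ℕ) = 0 then 1 else 0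
    have he : (fun i : Fin r => extendZero w (r + i)) =
        (hankelMatrix (extendZero w) r).mulVec e := by
      funext i
      have hi := i.2
      simp only [Matrix.mulVec, dotProduct]
      rw [Finset.sum_eq_single ⟨0, by omega⟩]
      · simp only [hankelMatrix, Matrix.of_apply, hw, e, if_true, mul_one]
        split_ifs <;> first | rfl | omega
      · intro b _ hb
        have hb' : (b : ℕ) ≠ 0 := fun h => hb (Fin.ext h)
        simp [e, hb']
      · simp
    intro j
    rw [recCoeff, he, Matrix.mulVec_mulVec, Matrix.adjugate_mul, Matrix.smul_mulVec,
      Matrix.one_mulVec]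
    simp [e]
  have hpoly : recPoly (extendZero w) r =
      Polynomial.C (hankelMatrix (extendZero w) r).det * (Polynomial.X ^ r - Polynomial.C 1) := by
    rw [recPoly, Finset.sum_eq_single ⟨0, by omega⟩]
    · simp [hcoeff, mul_sub]
    · intro b _ hb
      have hb' : (b : ℕ) ≠ 0 := fun h => hb (Fin.ext h)
      simp [hcoeff, hb']
    · simp
  have hsep : (recPoly (extendZero w) r).Separable := by
    rw [hpoly]
    refine Polynomial.Separable.unit_mul (Polynomial.isUnit_C.2 hdet.isUnit)
      (Polynomial.separable_X_pow_sub_C 1 ?_ one_ne_zero)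
    exact_mod_cast (by omega : r ≠ 0)
  refine (resultant_derivative_ne_zero_iff (by omega) (natDegree_recPoly hdet)).2 hsep ?_
  rw [← eval_recDiscPoly, h0, map_zero]

lemma Matrix.det_mul_eq_zero_of_lt {K : Type*} [Field K] {s r : ℕ} (hrs : r < s)
    (U : Matrix (Fin s) (Fin r) K) (V : Matrix (Fin r) (Fin s) K) : (U * V).det = 0 := by
  by_contra h
  have h1 := Matrix.rank_of_isUnit _ ((Matrix.isUnit_iff_isUnit_det _).2 (Ne.isUnit h))
  have h2 := (Matrix.rank_mul_le_left U V).trans U.rank_le_width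
  rw [h1, Fintype.card_fin] at h2
  omega

lemma exists_sum_fin_eq {n : ℕ} (hn : 0 < n) (m k : ℕ) (hk : k ≤ (n - 1) * m) :
    ∃ i : Fin m → Fin n, ∑ j, (i j : ℕ) = k := by
  induction m generalizing k with
  | zero => exact ⟨Fin.elim0, by simp at hk; simp [hk]⟩
  | succ m ih =>
    rw [mul_add_one] at hk
    obtain ⟨i, hi⟩ := ih (k - min k (n - 1)) (by omega)
    refine ⟨Fin.cons ⟨min k (n - 1), by omega⟩ i, ?_⟩
    simp only [Fin.sum_univ_succ, Fin.cons_zero, Fin.cons_succ, hi]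
    omega

section Tensors

variable {m n : ℕ}

lemma sum_fin_le (i : Fin m → Fin n) : ∑ j, (i j : ℕ) ≤ (n - 1) * m := by
  calc ∑ j, (i j : ℕ) ≤ ∑ _j : Fin m, (n - 1) := Finset.sum_le_sum fun j _ => by omega
    _ = (n - 1) * m := by simp [mul_comm]

lemma IsHankel.apply_eq {H : Tensor m n} {h : Fin ((n - 1) * m + 1) → ℂ} (hH : IsHankel H h)
    (i : Fin m → Fin n) : H i = extendZero h (∑ j, (i j : ℕ)) := by
  rw [hH i, extendZero, dif_pos]

lemma prod_vand (a b : ℂ) (i : Fin m → Fin n) :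
    ∏ j, vand n a b (i j) =
      a ^ ((n - 1) * m - ∑ j, (i j : ℕ)) * b ^ (∑ j, (i j : ℕ)) := by
  simp only [vand, Finset.prod_mul_distrib, Finset.prod_pow_eq_pow_sum]
  congr 2
  rw [Finset.sum_tsub_distrib _ fun j _ => by omega]
  simp [mul_comm]

lemma vandSet_subset_symSet (r : ℕ) : vandSet m n r ⊆ symSet m n r := fun _ ⟨ab, h⟩ =>
  ⟨fun k => vand n (ab k).1 (ab k).2, h⟩

lemma symSet_subset_cpSet (r : ℕ) : symSet m n r ⊆ cpSet m n r := fun _ ⟨v, h⟩ =>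
  ⟨fun k _ => v k, h⟩

lemma det_hankelMatrix_eq_zero_of_mem_vandSet {H : Tensor m n} {h : Fin ((n - 1) * m + 1) → ℂ}
    (hn : 0 < n) (hH : IsHankel H h) {r s : ℕ} (hrs : r < s) (hs : 2 * s ≤ (n - 1) * m + 2)
    (hr : H ∈ vandSet m n r) : (hankelMatrix (extendZero h) s).det = 0 := by
  obtain ⟨ab, hab⟩ := hr
  have key : ∀ k ≤ (n - 1) * m,
      extendZero h k = ∑ l, (ab l).1 ^ ((n - 1) * m - k) * (ab l).2 ^ k := fun k hk => by
    obtain ⟨i, rfl⟩ := exists_sum_fin_eq hn m k hk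
    rw [← hH.apply_eq, hab]
    simp only [prod_vand]
  rw [show hankelMatrix (extendZero h) s =
    (Matrix.of fun (i : Fin s) l => (ab l).1 ^ (s - 1 - (i : ℕ)) * (ab l).2 ^ (i : ℕ)) *
      (Matrix.of fun l (j : Fin s) =>
        (ab l).1 ^ ((n - 1) * m + 1 - s - (j : ℕ)) * (ab l).2 ^ (j : ℕ)) from ?_]
  · exact Matrix.det_mul_eq_zero_of_lt hrs _ _
  ext i j
  have hi := i.2
  have hj := j.2
  simp only [hankelMatrix, Matrix.of_apply, Matrix.mul_apply]
  rw [key _ (by omega)]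
  refine Finset.sum_congr rfl fun l _ => ?_
  rw [show (n - 1) * m - ((i : ℕ) + j) = (s - 1 - (i : ℕ)) + ((n - 1) * m + 1 - s - (j : ℕ)) by
    omega]
  ring

lemma mem_vandSet_of_separable {H : Tensor m n} {h : Fin ((n - 1) * m + 1) → ℂ}
    (hH : IsHankel H h) {r : ℕ} (hd : (n - 1) * m ≠ 0) (hr : (n - 1) * m < 2 * r)
    (hdet : (hankelMatrix (extendZero h) r).det ≠ 0)
    (hsep : (recPoly (extendZero h) r).Separable) : H ∈ vandSet m n r := by
  obtain ⟨c, x, hcx⟩ := exists_eq_sum_geometric hdet hsep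
  choose a ha using fun l => IsAlgClosed.exists_pow_nat_eq (c l) (Nat.pos_of_ne_zero hd)
  refine ⟨fun l => (a l, a l * x l), fun i => ?_⟩
  have hi := sum_fin_le i
  rw [hH.apply_eq, hcx _ (by omega)]
  refine Finset.sum_congr rfl fun l _ => ?_
  rw [prod_vand, mul_pow, ← mul_assoc, ← pow_add, Nat.sub_add_cancel hi, ha]

/-- Closure of the low-rank tensors is contained in the zero set of each flattening minor. -/
lemma det_eq_zero_of_mem_closure_cpSet {m₀ r s : ℕ} (hrs : r < s)
    (p q : Fin s → Fin m₀ → Fin n) (z : Fin n) {T : Tensor (2 * m₀ + 1) n}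
    (hT : T ∈ closure (cpSet (2 * m₀ + 1) n r)) (e : Fin (2 * m₀ + 1) ≃ (Fin m₀ ⊕ Fin m₀) ⊕ Unit) :
    (Matrix.of fun i j => T fun t =>
      Sum.elim (Sum.elim (p i) (q j)) (fun _ => z) (e t)).det = 0 := by
  have hcl : IsClosed {T : Tensor (2 * m₀ + 1) n | (Matrix.of fun i j => T fun t =>
      Sum.elim (Sum.elim (p i) (q j)) (fun _ => z) (e t)).det = 0} := by
    refine isClosed_eq (Continuous.matrix_det ?_) continuous_const
    exact continuous_matrix fun i j => continuous_apply _
  refine closure_minimal ?_ hcl hT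
  rintro T ⟨u, hu⟩
  simp only [Set.mem_ofPred_eq]
  rw [show (Matrix.of fun i j => T fun t =>
      Sum.elim (Sum.elim (p i) (q j)) (fun _ => z) (e t)) =
    (Matrix.of fun (i : Fin s) k => ∏ t, u k (e.symm (.inl (.inl t))) (p i t)) *
    (Matrix.of fun k (j : Fin s) => (∏ t, u k (e.symm (.inl (.inr t))) (q j t)) *
      u k (e.symm (.inr ())) z) from ?_]
  · exact Matrix.det_mul_eq_zero_of_lt hrs _ _
  ext i j
  simp only [Matrix.of_apply, Matrix.mul_apply]
  rw [hu]
  refine Finset.sum_congr rfl fun k _ => ?_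
  rw [← e.symm.prod_comp]
  simp [Fintype.prod_sum_type, mul_assoc]

lemma le_of_mem_closure_cpSet {m₀ r : ℕ} (hn : 0 < n) {H : Tensor (2 * m₀ + 1) n}
    {h : Fin ((n - 1) * (2 * m₀ + 1) + 1) → ℂ} (hH : IsHankel H h)
    (hdet : (hankelMatrix (extendZero h) (m₀ * (n - 1) + 1)).det ≠ 0)
    (hr : H ∈ closure (cpSet (2 * m₀ + 1) n r)) : m₀ * (n - 1) + 1 ≤ r := by
  by_contra! hlt
  choose p hp using fun s : Fin (m₀ * (n - 1) + 1) =>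
    exists_sum_fin_eq hn m₀ s ((Nat.lt_succ_iff.1 s.2).trans_eq (mul_comm _ _))
  obtain ⟨e⟩ : Nonempty (Fin (2 * m₀ + 1) ≃ (Fin m₀ ⊕ Fin m₀) ⊕ Unit) :=
    Fintype.card_eq.1 (by simp; omega)
  apply hdet
  rw [← det_eq_zero_of_mem_closure_cpSet hlt p p ⟨0, hn⟩ hr e]
  congr 1
  ext i j
  simp only [hankelMatrix, Matrix.of_apply, hH.apply_eq]
  congr 1
  rw [← e.symm.sum_comp]
  simp [Fintype.sum_sum_type, hp]

end Tensors

/-- For a generic Hankel tensor of odd order `m = 2m₀+1`,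
`rank_V(H) = m₀(n-1) + ⌈n/2⌉` and `m₀(n-1)+1 ≤ brank(H) ≤ rank(H) ≤ rank_S(H) ≤ rank_V(H)`. -/
theorem stmt_13 (n m₀ : ℕ) (hn : 2 ≤ n) (hm : 1 ≤ m₀) :
    ∃ P : MvPolynomial (Fin ((n - 1) * (2 * m₀ + 1) + 1)) ℂ, P ≠ 0 ∧
      ∀ (H : Tensor (2 * m₀ + 1) n) (h : Fin ((n - 1) * (2 * m₀ + 1) + 1) → ℂ),
        IsHankel H h → MvPolynomial.eval h P ≠ 0 →
        vandRank H = m₀ * (n - 1) + (n + 1) / 2 ∧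
        m₀ * (n - 1) + 1 ≤ brank H ∧ brank H ≤ cpRank H ∧
        cpRank H ≤ symRank H ∧ symRank H ≤ vandRank H := by
  set N := (n - 1) * (2 * m₀ + 1) + 1 with hN
  set R := m₀ * (n - 1) + (n + 1) / 2 with hR
  have hd : (n - 1) * (2 * m₀ + 1) = 2 * (m₀ * (n - 1)) + (n - 1) := by ring
  have hpos : 1 ≤ m₀ * (n - 1) := Nat.mul_pos hm (by omega)
  refine ⟨hankelDetPoly N R * recDiscPoly N R * hankelDetPoly N (m₀ * (n - 1) + 1),
    mul_ne_zero (mul_ne_zero (hankelDetPoly_ne_zero (by omega))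
      (recDiscPoly_ne_zero (by omega) (by omega))) (hankelDetPoly_ne_zero (by omega)), ?_⟩
  intro H h hH hP
  rw [map_mul, map_mul, eval_hankelDetPoly, eval_hankelDetPoly, eval_recDiscPoly] at hP
  have hdetR := left_ne_zero_of_mul (left_ne_zero_of_mul hP)
  have hsep := (resultant_derivative_ne_zero_iff (by omega) (natDegree_recPoly hdetR)).1
    (right_ne_zero_of_mul (left_ne_zero_of_mul hP))
  have hmem : H ∈ vandSet (2 * m₀ + 1) n R :=
    mem_vandSet_of_separable hH (by omega) (by omega) hdetR hsep
  have hvand : H ∈ vandSet (2 * m₀ + 1) n (vandRank H) :=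
    Nat.sInf_mem (s := {r | H ∈ vandSet (2 * m₀ + 1) n r}) ⟨R, hmem⟩
  have hsym : H ∈ symSet (2 * m₀ + 1) n (symRank H) :=
    Nat.sInf_mem (s := {r | H ∈ symSet (2 * m₀ + 1) n r}) ⟨R, vandSet_subset_symSet R hmem⟩
  have hcp : H ∈ cpSet (2 * m₀ + 1) n (cpRank H) :=
    Nat.sInf_mem (s := {r | H ∈ cpSet (2 * m₀ + 1) n r}) ⟨_, symSet_subset_cpSet _ hsym⟩
  have hbr : H ∈ closure (cpSet (2 * m₀ + 1) n (brank H)) :=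
    Nat.sInf_mem (s := {r | H ∈ closure (cpSet (2 * m₀ + 1) n r)}) ⟨_, subset_closure hcp⟩
  refine ⟨le_antisymm (Nat.sInf_le hmem) ?_, ?_, Nat.sInf_le (subset_closure hcp),
    Nat.sInf_le (symSet_subset_cpSet _ hsym), Nat.sInf_le (vandSet_subset_symSet _ hvand)⟩
  · by_contra! hlt
    exact hdetR (det_hankelMatrix_eq_zero_of_mem_vandSet (by omega) hH hlt (by omega) hvand)
  · exact le_of_mem_closure_cpSet (by omega) hH (right_ne_zero_of_mul hP) hbr
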